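/- Let G = (V,E) be a 3-connected (vertex connectivity at least 3), (3,6)-sparse 3-circuit with exactly 10 vertices, at most 24 edges, and minimum degree 4, and suppose G is not 3-rigid. Let u be a vertex of G of degree 4. Then there exist two neighbors x, y of u with xy ∉ E such that the graph G − u + xy, obtained by deleting u and adding the edge xy, is (3,6)-sparse. -/

import Mathlib

/-!
Only the edge count, the minimum degree, sparsity and 3-connectivity matter.  Suppose no reduction
at `u` is sparse.  Then every nonadjacent pair of neighbours of `u` lies in a set `X` of `G - u`
that is tight, i.e. spans exactly `3|X| - 6` edges (`exists_tight`).  No tight set of `G - u`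
contains all four neighbours of `u`, since adding `u` would violate sparsity, and a tight set
through a nonadjacent pair has at least five vertices.

With ten vertices, at most 24 edges and minimum degree 4, counting the edges outside a tight set
shows that it has at most six vertices (`card_le_six`; the case of seven uses 3-connectivity), and
that no single tight set contains all the nonadjacent pairs (`exists_nonadj_not_subset`).
Supermodularity of the edge count makes the union of two tight sets with at least three common
vertices tight.  Hence a tight set of size six would absorb every other relevant one
(`subset_of_card_six`), so all of them have exactly five vertices, and two distinct ones share at
most two vertices.  Sharing exactly two is impossible by `card_inter_ne_two`.  Sharing at most one,
two of them cover the nine vertices of `G - u` with one common vertex `c` and at most two edges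
across; every pair of neighbours of `u` across must be adjacent, which forces a split of type
`2 + 1` (with `c` the fourth neighbour), and then `c` and one further neighbour separate the graph
(`not_two_one`).
-/
/-!
Common rigidity-theoretic definitions, following the paper
"Computing maximum likelihood thresholds using graph rigidity".
-/

open scoped BigOperators

section Defs

variable {V : Type*}

/-- A configuration in `ℝ^d` is *generic* if the collection of all of its coordinates
is algebraically independent over `ℚ`. -/
def Generic {d : ℕ} (p : V → EuclideanSpace ℝ (Fin d)) : Prop :=
  AlgebraicIndependent ℚ (fun vi : V × Fin d => p vi.1 vi.2)

/-- `ω` is an equilibrium stress of the framework `(G, p)`: it is symmetric, supported on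
the edges of `G`, and satisfies the equilibrium condition at every vertex. -/
def IsEqStress [Fintype V] (G : SimpleGraph V) {d : ℕ}
    (p : V → EuclideanSpace ℝ (Fin d)) (ω : V → V → ℝ) : Prop :=
  (∀ i j, ω i j = ω j i) ∧
  (∀ i j, ¬ G.Adj i j → ω i j = 0) ∧
  (∀ i, ∑ j, ω i j • (p j - p i) = 0)

/-- The stress matrix associated to a stress `ω`:  off-diagonal entries are `-ω i j`
(which vanish off the edges of the graph) and the diagonal entry at `i` is `∑ k, ω i k`. -/
def stressMatrix [Fintype V] [DecidableEq V] (ω : V → V → ℝ) : Matrix V V ℝ :=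
  fun i j => if i = j then ∑ k, ω i k else - ω i j

/-- The maximum likelihood threshold of `G` (via its rigidity-theoretic characterization):
`d + 1` where `d` is the smallest dimension in which no generic framework `(G, p)` supports
a nonzero PSD equilibrium stress. -/
noncomputable def mlt [Fintype V] [DecidableEq V] (G : SimpleGraph V) : ℕ :=
  sInf {d : ℕ | ∀ p : V → EuclideanSpace ℝ (Fin d), Generic p →
    ∀ ω : V → V → ℝ, IsEqStress G p ω → (stressMatrix ω).PosSemidef → ω = 0} + 1

/-- The generic completion rank of `G`: `d + 1` where `d` is the smallest dimension in
which no generic framework `(G, p)` supports a nonzero equilibrium stress. -/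
noncomputable def gcr [Fintype V] (G : SimpleGraph V) : ℕ :=
  sInf {d : ℕ | ∀ p : V → EuclideanSpace ℝ (Fin d), Generic p →
    ∀ ω : V → V → ℝ, IsEqStress G p ω → ω = 0} + 1

/-- Two frameworks `(G, p)` and `(G, q)` are equivalent: corresponding edge lengths agree. -/
def FrameworkEquiv {d : ℕ} (G : SimpleGraph V) (p q : V → EuclideanSpace ℝ (Fin d)) : Prop :=
  ∀ ⦃u v⦄, G.Adj u v → dist (p u) (p v) = dist (q u) (q v)

/-- Two configurations are congruent: related by a Euclidean isometry of `ℝ^d`. -/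
def FrameworkCongruent {d : ℕ} (p q : V → EuclideanSpace ℝ (Fin d)) : Prop :=
  ∃ T : EuclideanSpace ℝ (Fin d) → EuclideanSpace ℝ (Fin d), Isometry T ∧ q = T ∘ p

/-- A framework is globally rigid if every equivalent framework is congruent to it. -/
def GloballyRigidFramework {d : ℕ} (G : SimpleGraph V)
    (p : V → EuclideanSpace ℝ (Fin d)) : Prop :=
  ∀ q : V → EuclideanSpace ℝ (Fin d), FrameworkEquiv G p q → FrameworkCongruent p q

/-- A framework is rigid if every equivalent framework in some neighborhood of `p`
is congruent to it. -/
def RigidFramework {d : ℕ} (G : SimpleGraph V)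
    (p : V → EuclideanSpace ℝ (Fin d)) : Prop :=
  ∃ U ∈ nhds p, ∀ q ∈ U, FrameworkEquiv G p q → FrameworkCongruent p q

/-- A graph is `d`-rigid if every generic framework in `ℝ^d` is rigid. -/
def IsRigidGraph (d : ℕ) (G : SimpleGraph V) : Prop :=
  ∀ p : V → EuclideanSpace ℝ (Fin d), Generic p → RigidFramework G p

/-- A graph is globally `d`-rigid if every generic framework in `ℝ^d` is globally rigid. -/
def IsGloballyRigidGraph (d : ℕ) (G : SimpleGraph V) : Prop :=
  ∀ p : V → EuclideanSpace ℝ (Fin d), Generic p → GloballyRigidFramework G p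

/-- A graph is `d`-independent if the rows of the rigidity matrix `R(G, p)` are linearly
independent for every generic `p`; equivalently (linear dependencies among the rows of
the rigidity matrix are exactly the equilibrium stresses), no generic framework in `ℝ^d`
supports a nonzero equilibrium stress. -/
def IsIndepGraph [Fintype V] (d : ℕ) (G : SimpleGraph V) : Prop :=
  ∀ p : V → EuclideanSpace ℝ (Fin d), Generic p →
    ∀ ω : V → V → ℝ, IsEqStress G p ω → ω = 0

/-- A graph is a `d`-circuit if it is not `d`-independent but every proper subgraph is. -/
def IsCircuitGraph [Fintype V] (d : ℕ) (G : SimpleGraph V) : Prop :=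
  ¬ IsIndepGraph d G ∧ ∀ H : SimpleGraph V, H < G → IsIndepGraph d H

/-- Vertex connectivity at least `k`: more than `k` vertices, and removing any fewer
than `k` vertices leaves a connected graph. -/
def IsKConnected [Fintype V] (k : ℕ) (G : SimpleGraph V) : Prop :=
  k < Fintype.card V ∧ ∀ S : Set V, S.ncard < k → (G.induce Sᶜ).Connected

/-- `i(X)`: the number of edges of `G` with both endpoints in `X`. -/
noncomputable def edgesWithin (G : SimpleGraph V) (X : Set V) : ℕ :=
  {e ∈ G.edgeSet | ∀ v ∈ e, v ∈ X}.ncard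

/-- `d(X, Y)`: the number of edges of `G` with one endpoint in `X \ Y` and the other
in `Y \ X`. -/
noncomputable def crossEdges (G : SimpleGraph V) (X Y : Set V) : ℕ :=
  {e ∈ G.edgeSet | ∃ u ∈ X \ Y, ∃ v ∈ Y \ X, e = s(u, v)}.ncard

/-- `G` is `(3,6)`-sparse. -/
def Sparse36 (G : SimpleGraph V) : Prop :=
  ∀ X : Set V, 3 ≤ X.ncard → edgesWithin G X ≤ 3 * X.ncard - 6

/-- `X` is 3-critical in `G`. -/
def ThreeCritical (G : SimpleGraph V) (X : Set V) : Prop :=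
  3 ≤ X.ncard ∧ edgesWithin G X = 3 * X.ncard - 6

/-- `G'` (on vertex set `Option V`, with new vertex `none`) is a `d`-dimensional
1-extension of `G`: an edge `xy` of `G` is deleted and the new vertex is joined to
`x`, `y` and `d - 1` further vertices. -/
def IsOneExtension [DecidableEq V] (d : ℕ) (G : SimpleGraph V)
    (G' : SimpleGraph (Option V)) : Prop :=
  ∃ (x y : V) (D : Finset V), G.Adj x y ∧ x ∉ D ∧ y ∉ D ∧ D.card = d - 1 ∧
    (∀ u v : V, G'.Adj (some u) (some v) ↔
      (G.Adj u v ∧ ¬((u = x ∧ v = y) ∨ (u = y ∧ v = x)))) ∧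
    (∀ u : V, G'.Adj (some u) none ↔ (u = x ∨ u = y ∨ u ∈ D))

end Defs

namespace SparseReduction

open Finset

/-! ### Counting adjacent ordered pairs -/

open Classical in
/-- The number of ordered pairs `(a, b) ∈ A × B` with `a` adjacent to `b`.  In particular
`adjCount G X X` is twice the number of edges of `G` inside `X`, and `adjCount G {v} univ` is the
degree of `v`. -/
noncomputable def adjCount {V : Type*} (G : SimpleGraph V) (A B : Finset V) : ℕ :=
  ∑ a ∈ A, ∑ b ∈ B, if G.Adj a b then 1 else 0

section Count

variable {V : Type*} {G : SimpleGraph V} {A B C : Finset V}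

theorem adjCount_comm : adjCount G A B = adjCount G B A := by
  unfold adjCount
  rw [Finset.sum_comm]
  refine Finset.sum_congr rfl fun b _ => Finset.sum_congr rfl fun a _ => ?_
  rw [G.adj_comm]

theorem adjCount_le_mul : adjCount G A B ≤ #A * #B := by
  unfold adjCount
  refine (Finset.sum_le_card_nsmul A _ #B fun a _ => ?_).trans (by simp)
  refine (Finset.sum_le_card_nsmul B _ 1 fun b _ => ?_).trans (by simp)
  split_ifs <;> simp

theorem adjCount_eq_mul (h : ∀ a ∈ A, ∀ b ∈ B, G.Adj a b) : adjCount G A B = #A * #B := by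
  unfold adjCount
  rw [Finset.sum_congr rfl fun a ha => Finset.sum_congr rfl fun b hb => if_pos (h a ha b hb)]
  simp

theorem adjCount_eq_zero : adjCount G A B = 0 ↔ ∀ a ∈ A, ∀ b ∈ B, ¬ G.Adj a b := by
  simp [adjCount]

theorem adjCount_singleton_self (v : V) : adjCount G {v} {v} = 0 := by
  simp [adjCount]

theorem adjCount_self_le : adjCount G A A ≤ #A * (#A - 1) := by
  classical
  unfold adjCount
  refine (Finset.sum_le_card_nsmul A _ (#A - 1) fun a ha => ?_).trans (by simp)
  rw [← Finset.add_sum_erase A _ ha]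
  rw [if_neg (SimpleGraph.irrefl G), zero_add]
  refine (Finset.sum_le_card_nsmul _ _ 1 fun b _ => ?_).trans (by simp [card_erase_of_mem ha])
  split_ifs <;> simp

theorem adjCount_clique (h : ∀ a ∈ A, ∀ b ∈ A, a ≠ b → G.Adj a b) :
    adjCount G A A = #A * (#A - 1) := by
  classical
  unfold adjCount
  rw [Finset.sum_const_nat (m := #A - 1)]
  intro a ha
  rw [← Finset.add_sum_erase A _ ha, Finset.sum_congr rfl fun b hb =>
    if_pos (h a ha b (mem_of_mem_erase hb) (ne_of_mem_erase hb).symm)]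
  simp [card_erase_of_mem ha]

variable [DecidableEq V]

theorem adjCount_union_left (h : Disjoint A B) :
    adjCount G (A ∪ B) C = adjCount G A C + adjCount G B C := by
  unfold adjCount
  rw [Finset.sum_union h]

theorem adjCount_union_right (h : Disjoint A B) :
    adjCount G C (A ∪ B) = adjCount G C A + adjCount G C B := by
  rw [adjCount_comm, adjCount_union_left h, adjCount_comm, adjCount_comm (A := B)]

theorem adjCount_self_union (h : Disjoint A B) :
    adjCount G (A ∪ B) (A ∪ B) = adjCount G A A + 2 * adjCount G A B + adjCount G B B := by
  rw [adjCount_union_left h, adjCount_union_right h, adjCount_union_right h,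
    adjCount_comm (A := B) (B := A)]
  ring

theorem adjCount_split_right (D : Finset V) :
    adjCount G C A = adjCount G C (A ∩ D) + adjCount G C (A \ D) := by
  rw [← adjCount_union_right (disjoint_sdiff_inter A D).symm]
  congr 1
  rw [union_comm, sdiff_union_inter]

theorem adjCount_mono_right (h : A ⊆ B) : adjCount G C A ≤ adjCount G C B := by
  rw [adjCount_split_right A (A := B), inter_eq_right.mpr h]
  omega

theorem adjCount_self_add_two_le {p q : V} (hp : p ∈ A) (hq : q ∈ A) (hpq : p ≠ q)
    (hadj : ¬ G.Adj p q) : adjCount G A A + 2 ≤ #A * (#A - 1) := by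
  have hsub : ({p, q} : Finset V) ⊆ A := by
    intro x hx
    rcases mem_insert.mp hx with rfl | hx
    · exact hp
    · rwa [mem_singleton.mp hx]
  have h2 : #({p, q} : Finset V) = 2 := card_pair hpq
  have hc : #(A \ {p, q}) + 2 = #A := by
    rw [← h2]; exact card_sdiff_add_card_eq_card hsub
  have e := adjCount_self_union (G := G) (disjoint_sdiff (s := {p, q}) (t := A))
  rw [union_sdiff_of_subset hsub] at e
  have e0 : adjCount G {p, q} {p, q} = 0 := by
    rw [adjCount_eq_zero]
    simp [hadj, G.adj_comm q p]
  have e1 := adjCount_le_mul (G := G) (A := {p, q}) (B := A \ {p, q})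
  have e2 := adjCount_self_le (G := G) (A := A \ {p, q})
  rw [h2] at e1
  generalize #(A \ {p, q}) = k at *
  rw [← hc]
  rcases k with _ | k
  · simp at *
    omega
  · simp only [Nat.add_sub_cancel] at e2
    have : (k + 1 + 2) * (k + 1 + 2 - 1) = (k + 1) * k + 4 * (k + 1) + 2 := by
      simp only [Nat.add_succ_sub_one]; ring
    rw [this]
    omega

/-- Adjacent pairs are supermodular, with the pairs across `A \ B` and `B \ A` as the defect. -/
theorem adjCount_union_add_inter :
    adjCount G (A ∪ B) (A ∪ B) + adjCount G (A ∩ B) (A ∩ B) =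
      adjCount G A A + adjCount G B B + 2 * adjCount G (A \ B) (B \ A) := by
  have h1 : Disjoint (A \ B) (A ∩ B) := disjoint_sdiff_inter A B
  have h2 : Disjoint (A ∩ B) (B \ A) := by
    rw [inter_comm]; exact (disjoint_sdiff_inter B A).symm
  have h3 : Disjoint (A \ B) B := sdiff_disjoint
  have hA : A = (A \ B) ∪ (A ∩ B) := (sdiff_union_inter A B).symm
  have hB : B = (A ∩ B) ∪ (B \ A) := by
    rw [inter_comm, union_comm, sdiff_union_inter]
  have eU : adjCount G (A ∪ B) (A ∪ B) =
      adjCount G (A \ B) (A \ B) + 2 * adjCount G (A \ B) B + adjCount G B B := by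
    rw [← sdiff_union_self_eq_union, adjCount_self_union h3]
  have eA : adjCount G A A = adjCount G (A \ B) (A \ B) + 2 * adjCount G (A \ B) (A ∩ B) +
      adjCount G (A ∩ B) (A ∩ B) := by
    rw [← adjCount_self_union h1, ← hA]
  have eC : adjCount G (A \ B) B =
      adjCount G (A \ B) (A ∩ B) + adjCount G (A \ B) (B \ A) := by
    rw [← adjCount_union_right h2, ← hB]
  omega

end Count

theorem two_one_or_one_two {m n : ℕ} (hm : 1 ≤ m) (hn : 1 ≤ n) (hs : 3 ≤ m + n)
    (hmn : m * n ≤ 2) : (m = 2 ∧ n = 1) ∨ (m = 1 ∧ n = 2) := by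
  have h1 : m ≤ 2 := by nlinarith
  have h2 : n ≤ 2 := by nlinarith
  interval_cases m <;> interval_cases n <;> omega

/-! ### The configuration forced by a failing reduction -/

/-- `X` misses `u` and is tight in `G`: it spans exactly `3|X| - 6` edges. -/
structure Tight {V : Type*} (G : SimpleGraph V) (u : V) (X : Finset V) : Prop where
  notMem : u ∉ X
  three_le : 3 ≤ #X
  count : adjCount G X X + 12 = 6 * #X

/-- The hypotheses of the theorem phrased with `adjCount`, together with the negation of its
conclusion (`blocked`): every pair of nonadjacent neighbours of `u` lies in a tight set of
`G - u`. -/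
structure Counterexample {V : Type*} [Fintype V] (G : SimpleGraph V) (u : V) : Prop where
  card : Fintype.card V = 10
  total : adjCount G univ univ ≤ 48
  sparse : ∀ X : Finset V, 3 ≤ #X → adjCount G X X + 12 ≤ 6 * #X
  deg : ∀ v, 4 ≤ adjCount G {v} univ
  deg_u : adjCount G {u} univ = 4
  sep : ∀ (c r : V) (A : Finset V), A.Nonempty → c ∉ A → r ∉ A →
    (∃ w, w ∉ A ∧ w ≠ c ∧ w ≠ r) → ∃ a ∈ A, ∃ b, b ∉ A ∧ b ≠ c ∧ b ≠ r ∧ G.Adj a b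
  blocked : ∀ x y, G.Adj u x → G.Adj u y → x ≠ y → ¬ G.Adj x y →
    ∃ X, Tight G u X ∧ x ∈ X ∧ y ∈ X

open Classical in
/-- The neighbourhood of `u`, as a finite set. -/
noncomputable def nbrs {V : Type*} [Fintype V] (G : SimpleGraph V) (u : V) : Finset V :=
  univ.filter (G.Adj u)

section Core

variable {V : Type*} [Fintype V] {G : SimpleGraph V} {u : V}

theorem mem_nbrs {v : V} : v ∈ nbrs G u ↔ G.Adj u v := by simp [nbrs]

variable [DecidableEq V]

theorem adjCount_u (A : Finset V) : adjCount G {u} A = #(A ∩ nbrs G u) := by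
  have h : adjCount G {u} (A \ nbrs G u) = 0 := by
    rw [adjCount_eq_zero]
    intro a ha b hb
    rw [mem_singleton] at ha
    subst ha
    rw [mem_sdiff, mem_nbrs] at hb
    exact hb.2
  rw [adjCount_split_right (nbrs G u), h, adjCount_eq_mul]
  · simp
  · intro a ha b hb
    rw [mem_singleton] at ha
    subst ha
    rw [mem_inter, mem_nbrs] at hb
    exact hb.2

namespace Counterexample

variable (h : Counterexample G u)
include h

theorem card_nbrs : #(nbrs G u) = 4 := by
  have := h.deg_u
  rwa [adjCount_u, univ_inter] at this

omit [DecidableEq V] in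
theorem degree_sum (O : Finset V) : 4 * #O ≤ adjCount G O univ := by
  have : ∑ a ∈ O, 4 ≤ adjCount G O univ := by
    unfold adjCount
    refine Finset.sum_le_sum fun a _ => ?_
    simpa [adjCount] using h.deg a
  simpa [mul_comm] using this

/-! ### The size of a tight set -/

theorem card_add_card_compl {X : Finset V} (hu : u ∉ X) : #X + #({u}ᶜ \ X) = 9 := by
  have hX : X ⊆ {u}ᶜ := by
    intro x hx
    rw [mem_compl, mem_singleton]
    rintro rfl
    exact hu hx
  have h1 := card_sdiff_add_card_eq_card hX
  rw [card_compl, h.card, card_singleton] at h1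
  omega

theorem card_le_nine {X : Finset V} (hu : u ∉ X) : #X ≤ 9 := by
  have := h.card_add_card_compl hu
  omega

omit h in
theorem adjCount_insert_u {X : Finset V} (hu : u ∉ X) :
    adjCount G ({u} ∪ X) ({u} ∪ X) = adjCount G X X + 2 * #(X ∩ nbrs G u) := by
  rw [adjCount_self_union (by simpa using hu), adjCount_singleton_self, adjCount_u]
  ring

/-- By the minimum degree condition, at least `4 * #Sᶜ` edges, minus those counted twice, have an
endpoint outside `S`; the at most 24 edges of `G` leave only the rest for `S`. -/
theorem total_bound (S : Finset V) :
    adjCount G S S + 8 * #Sᶜ ≤ 48 + adjCount G Sᶜ Sᶜ := by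
  have h1 := h.total
  have h2 := h.degree_sum Sᶜ
  have hd : Disjoint S Sᶜ := disjoint_compl_right
  rw [← union_compl S] at h1 h2
  rw [adjCount_self_union hd] at h1
  rw [adjCount_union_right hd, adjCount_comm] at h2
  omega

theorem card_inter_nbrs_add {X : Finset V} :
    #(X ∩ nbrs G u) + #(({u}ᶜ \ X) ∩ nbrs G u) = 4 := by
  rw [← h.card_nbrs, ← card_inter_add_card_sdiff (nbrs G u) X, inter_comm]
  congr 2
  ext v
  simp only [mem_inter, mem_sdiff, mem_compl, mem_singleton, mem_nbrs]
  constructor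
  · rintro ⟨⟨_, h1⟩, h2⟩
    exact ⟨h2, h1⟩
  · rintro ⟨h1, h2⟩
    exact ⟨⟨h1.ne', h2⟩, h1⟩

/-- `total_bound` for the set `X ∪ {u}`, where `u ∉ X`. -/
theorem outside_bound {X : Finset V} (hu : u ∉ X) :
    adjCount G X X + 2 * #(X ∩ nbrs G u) + 8 * #({u}ᶜ \ X) ≤
      48 + adjCount G ({u}ᶜ \ X) ({u}ᶜ \ X) := by
  have h1 := h.total_bound ({u} ∪ X)
  rwa [adjCount_insert_u hu, compl_union, ← sdiff_eq_inter_compl] at h1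

theorem tight_union {X Y : Finset V} (hX : Tight G u X) (hY : Tight G u Y)
    (hXY : 3 ≤ #(X ∩ Y)) : Tight G u (X ∪ Y) := by
  have h0 : 3 ≤ #(X ∪ Y) := hX.three_le.trans (card_le_card subset_union_left)
  refine ⟨by simp [hX.notMem, hY.notMem], h0, ?_⟩
  have h1 := h.sparse _ h0
  have h2 := h.sparse _ hXY
  have h3 := adjCount_union_add_inter (G := G) (A := X) (B := Y)
  have h4 := card_union_add_card_inter X Y
  have h5 := hX.count
  have h6 := hY.count
  omega

theorem card_inter_nbrs_le {X : Finset V} (hX : Tight G u X) : #(X ∩ nbrs G u) ≤ 3 := by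
  have h1 := h.sparse ({u} ∪ X) (hX.three_le.trans (card_le_card subset_union_right))
  rw [adjCount_insert_u hX.notMem, card_union_of_disjoint (by simpa using hX.notMem),
    card_singleton] at h1
  have := hX.count
  omega

theorem exists_nbr_notMem {X : Finset V} (hX : Tight G u X) : ∃ p, G.Adj u p ∧ p ∉ X := by
  by_contra! hc
  have h1 := h.card_inter_nbrs_le hX
  have h2 : X ∩ nbrs G u = nbrs G u := inter_eq_right.mpr fun p hp => hc p (mem_nbrs.mp hp)
  rw [h2, h.card_nbrs] at h1
  omega

theorem three_le_adjCount {X : Finset V} (hX : Tight G u X) (h4 : 4 ≤ #X) {v : V}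
    (hv : v ∈ X) : 3 ≤ adjCount G {v} X := by
  have hc := card_erase_of_mem hv
  have h1 := h.sparse (X.erase v) (by omega)
  have h2 := adjCount_self_union (G := G) (A := {v}) (B := X.erase v) (by simp)
  rw [← insert_eq, insert_erase hv, adjCount_singleton_self] at h2
  have h3 := adjCount_mono_right (G := G) (C := {v}) (erase_subset v X)
  have := hX.count
  omega

omit [Fintype V] h in
theorem five_le_card {X : Finset V} (hX : Tight G u X) {p q : V} (hp : p ∈ X) (hq : q ∈ X)
    (hpq : p ≠ q) (hadj : ¬ G.Adj p q) : 5 ≤ #X := by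
  have h1 := adjCount_self_add_two_le hp hq hpq hadj
  have h2 := hX.count
  have h3 := hX.three_le
  by_contra! h4
  obtain h5 | h5 : #X = 3 ∨ #X = 4 := by omega
  all_goals
    rw [h5] at h1 h2
    omega

/-- The neighbours of `u` do not form a clique, as `G` contains no `K₅`. -/
theorem exists_nonadj : ∃ x y, G.Adj u x ∧ G.Adj u y ∧ x ≠ y ∧ ¬ G.Adj x y := by
  by_contra! hc
  have hu : u ∉ nbrs G u := by simp [mem_nbrs]
  have h1 := adjCount_insert_u (G := G) hu
  rw [inter_self, adjCount_clique fun a ha b hb hab =>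
    hc a b (mem_nbrs.mp ha) (mem_nbrs.mp hb) hab] at h1
  have hcard : #({u} ∪ nbrs G u) = 5 := by
    rw [card_union_of_disjoint (by simpa using hu), h.card_nbrs, card_singleton]
  have h2 := h.sparse ({u} ∪ nbrs G u) (by omega)
  rw [hcard] at h2
  rw [h.card_nbrs] at h1
  omega

/-- A tight set of `G - u` with seven vertices leaves out two adjacent neighbours `z`, `w` of `u`,
with at most four edges between them and the set.  If some nonadjacent pair of neighbours of `u`
crosses between the set and `{z, w}`, deleting those of `z` and `w` that lie in a tight set through
that pair leaves a set that is too dense; otherwise the two neighbours of `u` in the set separate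
`{u, z, w}` from the rest. -/
theorem card_ne_seven {X : Finset V} (hX : Tight G u X) : #X ≠ 7 := by
  intro h7
  set O := {u}ᶜ \ X with hO
  have hc := h.card_add_card_compl hX.notMem
  have hb := h.outside_bound hX.notMem
  have hn := h.card_inter_nbrs_add (X := X)
  rw [← hO] at hc hb hn
  have hO2 : #O = 2 := by omega
  have hOO := adjCount_self_le (G := G) (A := O)
  rw [hO2] at hOO hb
  have hcount := hX.count
  rw [h7] at hcount
  have hON : #(O ∩ nbrs G u) ≤ 2 := hO2 ▸ card_le_card inter_subset_left
  have hXN2 : #(X ∩ nbrs G u) = 2 := by omega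
  have hOsub : O ⊆ nbrs G u := by
    rw [← inter_eq_left]
    exact eq_of_subset_of_card_le inter_subset_left (by omega)
  have hdXO : Disjoint X O := disjoint_sdiff
  have huO : u ∉ O := by simp [hO]
  have huniv : univ = {u} ∪ (X ∪ O) := by
    ext v
    simp only [hO, mem_univ, mem_union, mem_singleton, mem_sdiff, mem_compl, true_iff]
    tauto
  have hXO : adjCount G X O ≤ 4 := by
    have h1 := h.total
    rw [huniv, adjCount_insert_u (by simp [hX.notMem, huO]), adjCount_self_union hdXO,
      union_inter_distrib_right, card_union_of_disjoint
        (hdXO.mono inter_subset_left inter_subset_left)] at h1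
    omega
  by_cases hall : ∀ p ∈ X ∩ nbrs G u, ∀ q ∈ O, G.Adj p q
  · obtain ⟨c, r, hcr, hcrX⟩ := card_eq_two.mp hXN2
    have hz : adjCount G (X \ nbrs G u) O = 0 := by
      have h1 := adjCount_split_right (G := G) (C := O) (A := X) (nbrs G u)
      rw [adjCount_comm, adjCount_comm (A := O) (B := X ∩ nbrs G u), adjCount_eq_mul hall,
        hXN2, hO2, adjCount_comm (A := O)] at h1
      omega
    have hcX : c ∈ X ∩ nbrs G u := by simp [hcrX]
    have hrX : r ∈ X ∩ nbrs G u := by simp [hcrX]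
    have hcA : c ∉ {u} ∪ O := by
      simp only [mem_union, mem_singleton, not_or]
      refine ⟨?_, disjoint_left.mp hdXO (mem_inter.mp hcX).1⟩
      rintro rfl; exact hX.notMem (mem_inter.mp hcX).1
    have hrA : r ∉ {u} ∪ O := by
      simp only [mem_union, mem_singleton, not_or]
      refine ⟨?_, disjoint_left.mp hdXO (mem_inter.mp hrX).1⟩
      rintro rfl; exact hX.notMem (mem_inter.mp hrX).1
    have hw : ∃ w, w ∉ {u} ∪ O ∧ w ≠ c ∧ w ≠ r := by
      have h1 := card_inter_add_card_sdiff X (nbrs G u)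
      obtain ⟨w, hw⟩ := card_pos.mp (show 0 < #(X \ nbrs G u) by omega)
      rw [mem_sdiff] at hw
      refine ⟨w, ?_, ?_, ?_⟩
      · simp only [mem_union, mem_singleton, not_or]
        refine ⟨?_, disjoint_left.mp hdXO hw.1⟩
        rintro rfl; exact hX.notMem hw.1
      · rintro rfl; exact hw.2 (mem_inter.mp hcX).2
      · rintro rfl; exact hw.2 (mem_inter.mp hrX).2
    obtain ⟨a, ha, b, hb, hbc, hbr, hab⟩ := h.sep c r ({u} ∪ O) (by simp) hcA hrA hw
    simp only [mem_union, mem_singleton, not_or] at ha hb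
    have hbX : b ∈ X := by
      have := mem_univ b
      rw [huniv] at this
      simp only [mem_union, mem_singleton] at this
      tauto
    have hbN : b ∉ nbrs G u := by
      intro hbN
      have : b ∈ X ∩ nbrs G u := mem_inter.mpr ⟨hbX, hbN⟩
      rw [hcrX] at this
      simp only [mem_insert, mem_singleton] at this
      tauto
    rcases ha with rfl | ha
    · exact hbN (mem_nbrs.mpr hab)
    · exact adjCount_eq_zero.mp hz b (mem_sdiff.mpr ⟨hbX, hbN⟩) a ha hab.symm
  · push Not at hall
    obtain ⟨p, hp, q, hq, hpq⟩ := hall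
    rw [mem_inter, mem_nbrs] at hp
    have hne : p ≠ q := by
      rintro rfl; exact disjoint_left.mp hdXO hp.1 hq
    obtain ⟨Y, hY, hpY, hqY⟩ := h.blocked p q hp.2 (mem_nbrs.mp (hOsub hq)) hne hpq
    have hY5 := five_le_card hY hpY hqY hne hpq
    have hYsplit : Y = (Y ∩ X) ∪ (Y ∩ O) := by
      ext v
      have hv : v ∈ Y → v ≠ u := by rintro hv rfl; exact hY.notMem hv
      simp only [hO, mem_union, mem_inter, mem_sdiff, mem_compl, mem_singleton]
      tauto
    have hd : Disjoint (Y ∩ X) (Y ∩ O) := hdXO.mono inter_subset_right inter_subset_right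
    have hcY := card_union_of_disjoint hd
    have heY := adjCount_self_union (G := G) hd
    rw [← hYsplit] at hcY heY
    have hYO1 : 1 ≤ #(Y ∩ O) := card_pos.mpr ⟨q, mem_inter.mpr ⟨hqY, hq⟩⟩
    have hYO2 : #(Y ∩ O) ≤ 2 := hO2 ▸ card_le_card inter_subset_right
    have hYX := h.sparse (Y ∩ X) (by omega)
    have hcross : adjCount G (Y ∩ X) (Y ∩ O) ≤ adjCount G X (Y ∩ O) := by
      rw [adjCount_comm, adjCount_comm (A := X)]
      exact adjCount_mono_right inter_subset_right
    have hYc := hY.count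
    obtain hk | hk : #(Y ∩ O) = 1 ∨ #(Y ∩ O) = 2 := by omega
    · have hsd : #(O \ Y) = 1 := by
        have := card_inter_add_card_sdiff O Y
        rw [inter_comm] at this
        omega
      -- The vertex `s` of `O` outside `Y` still needs two neighbours in `X`.
      obtain ⟨s, hs⟩ := card_eq_one.mp hsd
      have hdegs := h.deg s
      have hsu : adjCount G {s} {u} ≤ 1 := by
        simpa using adjCount_le_mul (G := G) (A := {s}) (B := {u})
      have hsO : s ∈ O := by
        have : s ∈ O \ Y := by simp [hs]
        exact (mem_sdiff.mp this).1
      have hsOO : adjCount G {s} O ≤ 1 := by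
        have h1 : O = {s} ∪ O.erase s := by rw [← insert_eq, insert_erase hsO]
        rw [h1, adjCount_union_right (by simp), adjCount_singleton_self]
        have h2 := adjCount_le_mul (G := G) (A := {s}) (B := O.erase s)
        rw [card_erase_of_mem hsO] at h2
        simp only [card_singleton] at h2
        omega
      rw [huniv, adjCount_union_right (by simp [hX.notMem, huO]),
        adjCount_union_right hdXO] at hdegs
      have h3 := adjCount_split_right (G := G) (C := X) (A := O) Y
      rw [hs, inter_comm, adjCount_comm (A := X) (B := {s})] at h3
      have h4 := adjCount_self_le (G := G) (A := Y ∩ O)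
      rw [hk] at h4
      omega
    · have hm := adjCount_mono_right (G := G) (C := X) (inter_subset_right (s₁ := Y) (s₂ := O))
      have h4 := adjCount_self_le (G := G) (A := Y ∩ O)
      rw [hk] at h4
      omega

theorem card_le_six {X : Finset V} (hX : Tight G u X) : #X ≤ 6 := by
  have h7 := h.card_ne_seven hX
  have h3 := h.card_inter_nbrs_le hX
  have hc := h.card_add_card_compl hX.notMem
  have hb := h.outside_bound hX.notMem
  have hn := h.card_inter_nbrs_add (X := X)
  have hle : #(({u}ᶜ \ X) ∩ nbrs G u) ≤ #({u}ᶜ \ X) := card_le_card inter_subset_left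
  have hOO := adjCount_self_le (G := G) (A := {u}ᶜ \ X)
  have := hX.count
  by_contra! h6
  obtain h8 | h9 : #({u}ᶜ \ X) = 1 ∨ #({u}ᶜ \ X) = 0 := by omega
  · rw [h8] at hOO
    omega
  · omega

/-- A tight set `X` cannot contain every nonadjacent pair of neighbours of `u`: otherwise adding
to `X` the vertex `u` and its neighbours outside `X` gives a set of seven to nine vertices
that spans too many edges of `G`. -/
theorem exists_nonadj_not_subset {X : Finset V} (hX : Tight G u X) (h5 : 5 ≤ #X) :
    ∃ x y, G.Adj u x ∧ G.Adj u y ∧ x ≠ y ∧ ¬ G.Adj x y ∧ ¬ (x ∈ X ∧ y ∈ X) := by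
  by_contra! hc
  obtain ⟨x, y, hx, hy, hxy, hadj⟩ := h.exists_nonadj
  obtain ⟨hxX, hyX⟩ := hc x y hx hy hxy hadj
  have h2 : 2 ≤ #(X ∩ nbrs G u) := by
    rw [← card_pair hxy]
    refine card_le_card fun v hv => ?_
    rcases mem_insert.mp hv with rfl | hv
    · exact mem_inter.mpr ⟨hxX, mem_nbrs.mpr hx⟩
    · rw [mem_singleton] at hv
      subst hv
      exact mem_inter.mpr ⟨hyX, mem_nbrs.mpr hy⟩
  have h3 := h.card_inter_nbrs_le hX
  have h6 := h.card_le_six hX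
  set Z := nbrs G u \ X with hZ
  have hZc : #(X ∩ nbrs G u) + #Z = 4 := by
    rw [← h.card_nbrs, inter_comm]
    exact card_inter_add_card_sdiff _ _
  have huZ : u ∉ Z := by simp [hZ, mem_nbrs]
  have hdXZ : Disjoint X Z := disjoint_sdiff
  have hZZ : adjCount G Z Z = #Z * (#Z - 1) := by
    refine adjCount_clique fun a ha b hb hab => ?_
    rw [hZ, mem_sdiff, mem_nbrs] at ha hb
    by_contra hn
    exact ha.2 (hc a b ha.1 hb.1 hab hn).1
  have hZX : #(X ∩ nbrs G u) * #Z ≤ adjCount G X Z := by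
    rw [← adjCount_eq_mul (G := G), adjCount_comm, adjCount_comm (A := X)]
    · exact adjCount_mono_right inter_subset_left
    · intro a ha b hb
      rw [hZ, mem_sdiff, mem_nbrs] at hb
      rw [mem_inter, mem_nbrs] at ha
      by_contra hn
      refine hb.2 (hc a b ha.2 hb.1 ?_ hn).2
      rintro rfl
      exact hb.2 ha.1
  have huXZ : u ∉ X ∪ Z := by simp [hX.notMem, huZ]
  have hN : (X ∪ Z) ∩ nbrs G u = nbrs G u := by
    rw [inter_eq_right]
    intro v hv
    simp only [hZ, mem_union, mem_sdiff]
    tauto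
  have hb := h.outside_bound huXZ
  have hcc := h.card_add_card_compl huXZ
  have hOO := adjCount_self_le (G := G) (A := {u}ᶜ \ (X ∪ Z))
  rw [hN, h.card_nbrs, adjCount_self_union hdXZ] at hb
  rw [card_union_of_disjoint hdXZ] at hcc
  have hcnt := hX.count
  generalize #({u}ᶜ \ (X ∪ Z)) = o at *
  obtain ⟨hz, hn⟩ | ⟨hz, hn⟩ :
      (#Z = 1 ∧ #(X ∩ nbrs G u) = 3) ∨ (#Z = 2 ∧ #(X ∩ nbrs G u) = 2) := by omega
  all_goals
    rw [hz] at hZZ hZX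
    rw [hn] at hZX
    obtain rfl | rfl | rfl : o = 1 ∨ o = 2 ∨ o = 3 := by omega
    all_goals omega

/-! ### Pairs of tight sets -/

/-- A tight set with six vertices contains every tight set with at least five
vertices. -/
theorem subset_of_card_six {X Y : Finset V} (hX : Tight G u X) (h6 : #X = 6) (hY : Tight G u Y)
    (h5 : 5 ≤ #Y) : Y ⊆ X := by
  -- Two tight sets with three common vertices have a tight union, hence of size at most six.
  have key : ∀ Z : Finset V, Tight G u Z → 3 ≤ #(X ∩ Z) → Z ⊆ X := by
    intro Z hZ h3
    have h1 := h.card_le_six (h.tight_union hX hZ h3)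
    have h2 : X = X ∪ Z := eq_of_subset_of_card_le subset_union_left (by omega)
    rw [h2]
    exact subset_union_right
  have key2 : ∀ Z : Finset V, Tight G u Z → 5 ≤ #Z → ¬ Z ⊆ X →
      #Z = 5 ∧ #(X ∩ Z) = 2 ∧ X ∪ Z = {u}ᶜ := by
    intro Z hZ hZ5 hn
    have h1 : #(X ∩ Z) < 3 := by
      by_contra! h3
      exact hn (key Z hZ h3)
    have hu : u ∉ X ∪ Z := by simp [hX.notMem, hZ.notMem]
    have h2 := h.card_le_nine hu
    have h3 := card_union_add_card_inter X Z
    refine ⟨by omega, by omega, ?_⟩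
    refine eq_of_subset_of_card_le ?_ ?_
    · intro v hv
      rw [mem_compl, mem_singleton]
      rintro rfl
      exact hu hv
    · rw [card_compl, h.card, card_singleton]
      omega
  by_contra hYX
  obtain ⟨hY5, hXY, hU⟩ := key2 Y hY h5 hYX
  have huU : u ∉ X ∪ Y := by simp [hX.notMem, hY.notMem]
  have hc := h.card_add_card_compl huU
  have hb := h.outside_bound huU
  have hn := h.card_inter_nbrs_add (X := X ∪ Y)
  have hcards := card_union_add_card_inter X Y
  have hO : {u}ᶜ \ (X ∪ Y) = ∅ := by rw [hU]; simp
  have hOO : adjCount G (∅ : Finset V) ∅ = 0 := by simp [adjCount]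
  rw [hO, hOO] at hb
  rw [hO] at hn
  simp only [empty_inter, card_empty] at hb hn
  have hsup := adjCount_union_add_inter (G := G) (A := X) (B := Y)
  have hII := adjCount_self_le (G := G) (A := X ∩ Y)
  rw [hXY] at hII
  have hXc := hX.count
  have hYc := hY.count
  have hcross : adjCount G (X \ Y) (Y \ X) = 0 := by omega
  rw [adjCount_eq_zero] at hcross
  obtain ⟨q, huq, hqX⟩ := h.exists_nbr_notMem hX
  obtain ⟨p, hup, hpY⟩ := h.exists_nbr_notMem hY
  have hcover : ∀ v, G.Adj u v → v ∈ X ∨ v ∈ Y := by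
    intro v hv
    rw [← mem_union, hU, mem_compl, mem_singleton]
    exact hv.ne'
  have hpX : p ∈ X := (hcover p hup).resolve_right hpY
  have hqY : q ∈ Y := (hcover q huq).resolve_left hqX
  have hpq := hcross p (mem_sdiff.mpr ⟨hpX, hpY⟩) q (mem_sdiff.mpr ⟨hqY, hqX⟩)
  have hne : p ≠ q := by rintro rfl; exact hqX hpX
  obtain ⟨Z, hZ, hpZ, hqZ⟩ := h.blocked p q hup huq hne hpq
  have hZX : ¬ Z ⊆ X := fun hs => hqX (hs hqZ)
  obtain ⟨hZ5, hXZ, hUZ⟩ := key2 Z hZ (five_le_card hZ hpZ hqZ hne hpq) hZX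
  -- `Y` and `Z` agree outside `X`, where both have three vertices.
  have hsub : Y \ X ⊆ Y ∩ Z := by
    intro v hv
    rw [mem_sdiff] at hv
    have : v ∈ X ∪ Z := by rw [hUZ, ← hU]; exact mem_union_right _ hv.1
    exact mem_inter.mpr ⟨hv.1, (mem_union.mp this).resolve_left hv.2⟩
  have h3 : 3 ≤ #(Y ∩ Z) := by
    have h1 := card_inter_add_card_sdiff Y X
    rw [inter_comm] at h1
    have h2 := card_le_card hsub
    omega
  have hT := h.tight_union hY hZ h3
  have hTX : ¬ (Y ∪ Z) ⊆ X := fun hs => hZX (subset_union_right.trans hs)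
  obtain ⟨hT5, _, _⟩ := key2 _ hT
    (h5.trans (card_le_card subset_union_left)) hTX
  have : Y = Y ∪ Z := eq_of_subset_of_card_le subset_union_left (by omega)
  exact hpY (this ▸ mem_union_right _ hpZ)

theorem card_eq_five {X : Finset V} (hX : Tight G u X) (h5 : 5 ≤ #X) : #X = 5 := by
  have h6 := h.card_le_six hX
  by_contra hn
  have hX6 : #X = 6 := by omega
  obtain ⟨x, y, hx, hy, hxy, hadj, hnot⟩ := h.exists_nonadj_not_subset hX h5
  obtain ⟨Y, hY, hxY, hyY⟩ := h.blocked x y hx hy hxy hadj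
  have hs := h.subset_of_card_six hX hX6 hY (five_le_card hY hxY hyY hxy hadj)
  exact hnot ⟨hs hxY, hs hyY⟩

theorem card_inter_le_two {X Y : Finset V} (hX : Tight G u X) (hY : Tight G u Y) (hX5 : #X = 5)
    (hY5 : #Y = 5) (hne : X ≠ Y) : #(X ∩ Y) ≤ 2 := by
  by_contra! h3
  have h1 := h.card_eq_five (h.tight_union hX hY h3)
    (hX5 ▸ card_le_card subset_union_left)
  have e1 : X = X ∪ Y := eq_of_subset_of_card_le subset_union_left (by omega)
  have e2 : Y = X ∪ Y := eq_of_subset_of_card_le subset_union_right (by omega)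
  exact hne (e1.trans e2.symm)

/-- Two five-vertex tight sets, each containing a nonadjacent pair of neighbours of `u`, do not
share exactly two vertices: they would leave exactly one vertex of `G - u` uncovered and have no
edges between their differences, and in a third tight set, through a nonadjacent pair across, a
vertex of that pair would have too few neighbours. -/
theorem card_inter_ne_two {X Y : Finset V} (hX : Tight G u X) (hY : Tight G u Y) (hX5 : #X = 5)
    (hY5 : #Y = 5) {x y x' y' : V} (hx : G.Adj u x) (hy : G.Adj u y) (hxy : x ≠ y)
    (hadj : ¬ G.Adj x y) (hxX : x ∈ X) (hyX : y ∈ X) (hx' : G.Adj u x') (hy' : G.Adj u y')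
    (hxy' : x' ≠ y') (hadj' : ¬ G.Adj x' y') (hxY : x' ∈ Y) (hyY : y' ∈ Y) :
    #(X ∩ Y) ≠ 2 := by
  intro h2
  have hu : u ∉ X ∪ Y := by simp [hX.notMem, hY.notMem]
  have hc := h.card_add_card_compl hu
  have hb := h.outside_bound hu
  have hn := h.card_inter_nbrs_add (X := X ∪ Y)
  have hcards := card_union_add_card_inter X Y
  have hO : #({u}ᶜ \ (X ∪ Y)) = 1 := by omega
  have hOO := adjCount_self_le (G := G) (A := {u}ᶜ \ (X ∪ Y))
  rw [hO] at hOO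
  have hle : #(({u}ᶜ \ (X ∪ Y)) ∩ nbrs G u) ≤ #({u}ᶜ \ (X ∪ Y)) :=
    card_le_card inter_subset_left
  have hsup := adjCount_union_add_inter (G := G) (A := X) (B := Y)
  have hII := adjCount_self_le (G := G) (A := X ∩ Y)
  rw [h2] at hII
  have hXc := hX.count
  have hYc := hY.count
  have hcross : adjCount G (X \ Y) (Y \ X) = 0 := by omega
  have hI2 : adjCount G (X ∩ Y) (X ∩ Y) = 2 := by omega
  -- The two common vertices are adjacent, so no nonadjacent pair consists of them.
  have key : ∀ a b, a ≠ b → ¬ G.Adj a b → a ∈ X ∩ Y → b ∉ X ∩ Y := by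
    intro a b hab hnab ha hbm
    have := adjCount_self_add_two_le ha hbm hab hnab
    rw [hI2, h2] at this
    omega
  have hp : ∃ p, G.Adj u p ∧ p ∈ X ∧ p ∉ Y := by
    by_cases hxY : x ∈ Y
    · exact ⟨y, hy, hyX, fun hyY =>
        key x y hxy hadj (mem_inter.mpr ⟨hxX, hxY⟩) (mem_inter.mpr ⟨hyX, hyY⟩)⟩
    · exact ⟨x, hx, hxX, hxY⟩
  have hq : ∃ q, G.Adj u q ∧ q ∈ Y ∧ q ∉ X := by
    by_cases hxX' : x' ∈ X
    · exact ⟨y', hy', hyY, fun hyX' =>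
        key x' y' hxy' hadj' (mem_inter.mpr ⟨hxX', hxY⟩) (mem_inter.mpr ⟨hyX', hyY⟩)⟩
    · exact ⟨x', hx', hxY, hxX'⟩
  obtain ⟨p, hup, hpX, hpY⟩ := hp
  obtain ⟨q, huq, hqY, hqX⟩ := hq
  rw [adjCount_eq_zero] at hcross
  have hpq := hcross p (mem_sdiff.mpr ⟨hpX, hpY⟩) q (mem_sdiff.mpr ⟨hqY, hqX⟩)
  have hne : p ≠ q := by rintro rfl; exact hqX hpX
  obtain ⟨Z, hZ, hpZ, hqZ⟩ := h.blocked p q hup huq hne hpq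
  have hZ5 := h.card_eq_five hZ (five_le_card hZ hpZ hqZ hne hpq)
  have hZX := h.card_inter_le_two hX hZ hX5 hZ5 (by rintro rfl; exact hqX hqZ)
  have hZY := h.card_inter_le_two hY hZ hY5 hZ5 (by rintro rfl; exact hpY hpZ)
  -- Counting forces two vertices of `Z` into `Y` and none of them into `X`.
  have hcov : Z ⊆ (X ∩ Z) ∪ ((Y \ X) ∩ Z) ∪ ({u}ᶜ \ (X ∪ Y)) := by
    intro v hv
    have hvu : v ≠ u := by rintro rfl; exact hZ.notMem hv
    simp only [mem_union, mem_inter, mem_sdiff, mem_compl, mem_singleton]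
    tauto
  have h7 := card_le_card hcov
  have h8 := card_union_le ((X ∩ Z) ∪ ((Y \ X) ∩ Z)) ({u}ᶜ \ (X ∪ Y))
  have h9 := card_union_le (X ∩ Z) ((Y \ X) ∩ Z)
  have hT : 2 ≤ #((Y \ X) ∩ Z) := by omega
  have hpd := h.three_le_adjCount hZ (by omega) hpZ
  have hz : adjCount G {p} (Z ∩ (Y \ X)) = 0 := by
    rw [adjCount_eq_zero]
    intro a ha b hb
    rw [mem_singleton] at ha
    subst ha
    exact hcross a (mem_sdiff.mpr ⟨hpX, hpY⟩) b (mem_inter.mp hb).2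
  have hps : p ∈ Z \ (Y \ X) := by simp [hpZ, hpY]
  rw [adjCount_split_right (Y \ X), hz, ← insert_erase hps, insert_eq,
    adjCount_union_right (by simp), adjCount_singleton_self] at hpd
  have h10 := adjCount_le_mul (G := G) (A := {p}) (B := (Z \ (Y \ X)).erase p)
  rw [card_erase_of_mem hps, card_singleton] at h10
  have h11 := card_inter_add_card_sdiff Z (Y \ X)
  rw [inter_comm] at h11
  omega

/-- If two five-vertex tight sets with a single common vertex `c` cover `G - u`, and every
neighbour of `u` in `X \ Y` is adjacent to every neighbour of `u` in `Y \ X`, then there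
cannot be two such neighbours in `X` and only one in `Y`: the latter and `c` would separate
the remaining three vertices of `Y`. -/
theorem not_two_one {X Y : Finset V} (hX : Tight G u X) (hY : Tight G u Y) (hY5 : #Y = 5)
    (hI : #(X ∩ Y) = 1) (hU : X ∪ Y = {u}ᶜ) (hcross : adjCount G (X \ Y) (Y \ X) ≤ 2)
    (hadj : ∀ p ∈ (X \ Y) ∩ nbrs G u, ∀ q ∈ (Y \ X) ∩ nbrs G u, G.Adj p q)
    (hP : #((X \ Y) ∩ nbrs G u) = 2) (hQ : #((Y \ X) ∩ nbrs G u) = 1) : False := by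
  obtain ⟨c, hc⟩ := card_eq_one.mp hI
  obtain ⟨r, hr⟩ := card_eq_one.mp hQ
  have hr' : r ∈ (Y \ X) ∩ nbrs G u := by simp [hr]
  have hrYX : r ∈ Y \ X := (mem_inter.mp hr').1
  have hcI : c ∈ X ∩ Y := by simp [hc]
  rw [mem_inter] at hcI
  set A := (Y \ X).erase r with hA
  have hAc : #A = 3 := by
    have := card_inter_add_card_sdiff Y X
    rw [inter_comm] at this
    rw [hA, card_erase_of_mem hrYX]
    omega
  have hz : adjCount G (X \ Y) A = 0 := by
    rw [← insert_erase hrYX, insert_eq, adjCount_union_right (by simp), ← hA] at hcross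
    have h1 := adjCount_eq_mul (G := G) hadj
    rw [hP, hQ, hr, adjCount_comm] at h1
    have h2 := adjCount_mono_right (G := G) (C := {r})
      (inter_subset_left (s₁ := X \ Y) (s₂ := nbrs G u))
    rw [adjCount_comm (B := X \ Y)] at h2
    omega
  obtain ⟨a, ha, b, hbA, hbc, hbr, hab⟩ := h.sep c r A (card_pos.mp (by omega))
    (by simp [hA, hcI.1]) (by simp [hA])
    ⟨u, by simp [hA, hY.notMem], by rintro rfl; exact hX.notMem hcI.1,
      by rintro rfl; exact hY.notMem (mem_sdiff.mp hrYX).1⟩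
  have haYX : a ∈ Y \ X := mem_of_mem_erase ha
  by_cases hbu : b = u
  · subst hbu
    have : a ∈ (Y \ X) ∩ nbrs G b := mem_inter.mpr ⟨haYX, mem_nbrs.mpr hab.symm⟩
    rw [hr, mem_singleton] at this
    exact ne_of_mem_erase ha this
  · have hbU : b ∈ X ∪ Y := by rw [hU]; simpa using hbu
    have hbI : b ∉ X ∩ Y := by rw [hc]; simpa using hbc
    have hbYX : b ∉ Y \ X := fun hb => hbA (mem_erase.mpr ⟨hbr, hb⟩)
    have hbXY : b ∈ X \ Y := by
      simp only [mem_union, mem_inter, mem_sdiff] at *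
      tauto
    exact adjCount_eq_zero.mp hz b hbXY a ha hab.symm

/-- Two tight sets `X`, `Y` through different nonadjacent pairs share exactly one vertex and cover
`G - u`, so at most two edges run between `X \ Y` and `Y \ X`; but all neighbours of `u` in
`X \ Y` must be adjacent to all those in `Y \ X`. -/
theorem false : False := by
  obtain ⟨x, y, hx, hy, hxy, hadj⟩ := h.exists_nonadj
  obtain ⟨X, hX, hxX, hyX⟩ := h.blocked x y hx hy hxy hadj
  have hX5 := h.card_eq_five hX (five_le_card hX hxX hyX hxy hadj)
  obtain ⟨x', y', hx', hy', hxy', hadj', hnot⟩ := h.exists_nonadj_not_subset hX hX5.ge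
  obtain ⟨Y, hY, hxY, hyY⟩ := h.blocked x' y' hx' hy' hxy' hadj'
  have hY5 := h.card_eq_five hY (five_le_card hY hxY hyY hxy' hadj')
  have hne : X ≠ Y := by rintro rfl; exact hnot ⟨hxY, hyY⟩
  have hI2 := h.card_inter_le_two hX hY hX5 hY5 hne
  have hIne := h.card_inter_ne_two hX hY hX5 hY5 hx hy hxy hadj hxX hyX hx' hy' hxy' hadj' hxY hyY
  have hu : u ∉ X ∪ Y := by simp [hX.notMem, hY.notMem]
  have h9 := h.card_le_nine hu
  have hcards := card_union_add_card_inter X Y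
  have hI : #(X ∩ Y) = 1 := by omega
  have hU : X ∪ Y = {u}ᶜ := by
    refine eq_of_subset_of_card_le ?_ ?_
    · intro v hv
      rw [mem_compl, mem_singleton]
      rintro rfl
      exact hu hv
    · rw [card_compl, h.card, card_singleton]
      omega
  have hb := h.outside_bound hu
  have hn := h.card_inter_nbrs_add (X := X ∪ Y)
  have hO : {u}ᶜ \ (X ∪ Y) = ∅ := by rw [hU]; simp
  have hOO : adjCount G (∅ : Finset V) ∅ = 0 := by simp [adjCount]
  rw [hO, hOO] at hb
  rw [hO] at hn
  simp only [empty_inter, card_empty] at hb hn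
  have hsup := adjCount_union_add_inter (G := G) (A := X) (B := Y)
  have hII := adjCount_self_le (G := G) (A := X ∩ Y)
  rw [hI] at hII
  have hXc := hX.count
  have hYc := hY.count
  have hcross : adjCount G (X \ Y) (Y \ X) ≤ 2 := by omega
  have hPQ : ∀ p ∈ (X \ Y) ∩ nbrs G u, ∀ q ∈ (Y \ X) ∩ nbrs G u, G.Adj p q := by
    intro p hp q hq
    rw [mem_inter, mem_sdiff, mem_nbrs] at hp hq
    by_contra hpq
    have hpqne : p ≠ q := by rintro rfl; exact hp.1.2 hq.1.1
    -- A tight set through `p` and `q` would have at most two vertices in each of `X`, `Y`.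
    obtain ⟨Z, hZ, hpZ, hqZ⟩ := h.blocked p q hp.2 hq.2 hpqne hpq
    have hZ5 := h.card_eq_five hZ (five_le_card hZ hpZ hqZ hpqne hpq)
    have hZX := h.card_inter_le_two hX hZ hX5 hZ5 (by rintro rfl; exact hq.1.2 hqZ)
    have hZY := h.card_inter_le_two hY hZ hY5 hZ5 (by rintro rfl; exact hp.1.2 hpZ)
    have hcov : Z ⊆ (X ∩ Z) ∪ (Y ∩ Z) := by
      intro v hv
      have hvU : v ∈ X ∪ Y := by
        rw [hU, mem_compl, mem_singleton]
        rintro rfl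
        exact hZ.notMem hv
      simp only [mem_union, mem_inter] at *
      tauto
    have h7 := card_le_card hcov
    have h8 := card_union_le (X ∩ Z) (Y ∩ Z)
    omega
  have hPQc := adjCount_eq_mul (G := G) hPQ
  have hle : adjCount G ((X \ Y) ∩ nbrs G u) ((Y \ X) ∩ nbrs G u) ≤
      adjCount G (X \ Y) (Y \ X) := by
    refine (adjCount_mono_right inter_subset_left).trans ?_
    rw [adjCount_comm, adjCount_comm (A := X \ Y)]
    exact adjCount_mono_right inter_subset_left
  have hXN := h.card_inter_nbrs_le hX
  have hYN := h.card_inter_nbrs_le hY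
  -- The four neighbours of `u` lie in `X \ Y`, in `Y \ X`, or at the single common vertex.
  have hsplitU : (X ∪ Y) ∩ nbrs G u = (X ∩ nbrs G u) ∪ ((Y \ X) ∩ nbrs G u) := by
    ext v
    simp only [mem_union, mem_inter, mem_sdiff]
    tauto
  have hsplitU' : (X ∪ Y) ∩ nbrs G u = (Y ∩ nbrs G u) ∪ ((X \ Y) ∩ nbrs G u) := by
    ext v
    simp only [mem_union, mem_inter, mem_sdiff]
    tauto
  have hsplitX : X ∩ nbrs G u ⊆ (X ∩ Y) ∪ ((X \ Y) ∩ nbrs G u) := by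
    intro v
    simp only [mem_union, mem_inter, mem_sdiff]
    tauto
  have c1 := card_union_le (X ∩ nbrs G u) ((Y \ X) ∩ nbrs G u)
  have c2 := card_union_le (Y ∩ nbrs G u) ((X \ Y) ∩ nbrs G u)
  have c3 := (card_le_card hsplitX).trans (card_union_le _ _)
  rw [← hsplitU] at c1
  rw [← hsplitU'] at c2
  have hmul : #((X \ Y) ∩ nbrs G u) * #((Y \ X) ∩ nbrs G u) ≤ 2 := by omega
  have hXY : (#((X \ Y) ∩ nbrs G u) = 2 ∧ #((Y \ X) ∩ nbrs G u) = 1) ∨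
      (#((X \ Y) ∩ nbrs G u) = 1 ∧ #((Y \ X) ∩ nbrs G u) = 2) := by
    exact two_one_or_one_two (by omega) (by omega) (by omega) hmul
  rcases hXY with ⟨hP, hQ⟩ | ⟨hP, hQ⟩
  · exact h.not_two_one hX hY hY5 hI hU hcross hPQ hP hQ
  · refine h.not_two_one hY hX hX5 (by rwa [inter_comm]) (by rwa [union_comm])
      (by rwa [adjCount_comm]) (fun p hp q hq => (hPQ q hq p hp).symm) hQ hP

end Counterexample
end Core

/-! ### From the graph-theoretic hypotheses to the counts -/

section Translation

variable {V : Type*} [Fintype V]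

/-- Handshake lemma inside `X`. -/
theorem two_mul_edgesWithin (G : SimpleGraph V) (X : Finset V) :
    2 * edgesWithin G X = adjCount G X X := by
  classical
  let H : SimpleGraph V :=
    { Adj := fun a b => G.Adj a b ∧ a ∈ X ∧ b ∈ X
      symm := ⟨fun _ _ hab => ⟨hab.1.symm, hab.2.2, hab.2.1⟩⟩
      loopless := ⟨fun a ha => G.irrefl ha.1⟩ }
  have hE : {e ∈ G.edgeSet | ∀ v ∈ e, v ∈ (X : Set V)} = (H.edgeFinset : Set (Sym2 V)) := by
    ext e
    induction e using Sym2.ind with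
    | _ a b => simp [H]
  have hdeg : ∀ a, H.degree a = ∑ b, if H.Adj a b then 1 else 0 := by
    intro a
    rw [← SimpleGraph.card_neighborFinset_eq_degree, SimpleGraph.neighborFinset_eq_filter,
      Finset.card_filter]
  rw [edgesWithin, hE, Set.ncard_coe_finset, ← H.sum_degrees_eq_twice_card_edges]
  simp only [hdeg]
  unfold adjCount
  rw [← Finset.sum_subset (Finset.subset_univ X)]
  · refine Finset.sum_congr rfl fun a ha => ?_
    rw [← Finset.sum_subset (Finset.subset_univ X)]
    · exact Finset.sum_congr rfl fun b hb => by simp [H, ha, hb]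
    · intro b _ hb
      simp [H, hb]
  · intro a _ ha
    simp [H, ha]

theorem adjCount_singleton_univ (G : SimpleGraph V) (v : V) :
    adjCount G {v} univ = (G.neighborSet v).ncard := by
  classical
  have : G.neighborSet v = ((univ.filter (G.Adj v) : Finset V) : Set V) := by
    ext w; simp
  rw [this, Set.ncard_coe_finset, Finset.card_filter]
  simp [adjCount]

/-- Removing two vertices from a `3`-connected graph does not separate it. -/
theorem exists_boundary_edge {G : SimpleGraph V} (hconn : IsKConnected 3 G) {c r : V}
    {A : Finset V} (hA : A.Nonempty) (hc : c ∉ A) (hr : r ∉ A)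
    (hw : ∃ w, w ∉ A ∧ w ≠ c ∧ w ≠ r) :
    ∃ a ∈ A, ∃ b, b ∉ A ∧ b ≠ c ∧ b ≠ r ∧ G.Adj a b := by
  obtain ⟨a₀, ha₀⟩ := hA
  obtain ⟨w, hwA, hwc, hwr⟩ := hw
  have hS : ({c, r} : Set V).ncard < 3 := (Set.ncard_insert_le c {r}).trans_lt (by simp)
  have hcon := hconn.2 _ hS
  have ha₀S : a₀ ∈ ({c, r} : Set V)ᶜ := by
    simp only [Set.mem_compl_iff, Set.mem_insert_iff, Set.mem_singleton_iff, not_or]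
    exact ⟨by rintro rfl; exact hc ha₀, by rintro rfl; exact hr ha₀⟩
  have hwS : w ∈ ({c, r} : Set V)ᶜ := by simp [hwc, hwr]
  obtain ⟨walk⟩ := hcon.preconnected ⟨a₀, ha₀S⟩ ⟨w, hwS⟩
  obtain ⟨d, _, h1, h2⟩ := walk.exists_boundary_dart {v | (v : V) ∈ A} ha₀ hwA
  have hb := d.snd.2
  simp only [Set.mem_compl_iff, Set.mem_insert_iff, Set.mem_singleton_iff, not_or] at hb
  exact ⟨d.fst, h1, d.snd, h2, hb.1, hb.2, d.adj⟩

/-- A set violating sparsity of `G - u + xy` contains `x` and `y` and is tight in `G - u`. -/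
theorem exists_tight {G : SimpleGraph V}
    (hsparse : ∀ X : Finset V, 3 ≤ #X → adjCount G X X + 12 ≤ 6 * #X) {u x y : V}
    (hx : x ≠ u) (hy : y ≠ u)
    (hns : ¬ Sparse36 ((G.induce {v : V | v ≠ u}) ⊔ SimpleGraph.fromEdgeSet
        {s((⟨x, hx⟩ : {v : V | v ≠ u}), (⟨y, hy⟩ : {v : V | v ≠ u}))})) :
    ∃ X, Tight G u X ∧ x ∈ X ∧ y ∈ X := by
  classical
  unfold Sparse36 at hns
  push Not at hns
  obtain ⟨X, hX3, hXe⟩ := hns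
  set X' : Finset V := (Subtype.val '' X).toFinset with hX'
  have hcoe : (X' : Set V) = Subtype.val '' X := by simp [hX']
  have hcard : #X' = X.ncard := by
    rw [← Set.ncard_coe_finset, hcoe, Set.ncard_image_of_injective _ Subtype.val_injective]
  have hu : u ∉ X' := by simp [hX']
  have hinj : Function.Injective (Sym2.map (Subtype.val : {v : V | v ≠ u} → V)) :=
    Sym2.map.injective Subtype.val_injective
  set E := {e ∈ G.edgeSet | ∀ v ∈ e, v ∈ (X' : Set V)} with hE
  have hfin : E.Finite := Set.toFinite _
  have hsub : Sym2.map Subtype.val '' {e ∈ ((G.induce {v : V | v ≠ u}) ⊔ SimpleGraph.fromEdgeSet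
      {s((⟨x, hx⟩ : {v : V | v ≠ u}), (⟨y, hy⟩ : {v : V | v ≠ u}))}).edgeSet |
        ∀ v ∈ e, v ∈ X} ⊆ {e | e = s(x, y) ∧ x ∈ X' ∧ y ∈ X'} ∪ E := by
    rintro _ ⟨e, he, rfl⟩
    induction e using Sym2.ind with
    | _ a b =>
      obtain ⟨a, ha⟩ := a
      obtain ⟨b, hb⟩ := b
      obtain ⟨he1, he2⟩ := he
      have haX : a ∈ X' := by
        rw [← Finset.mem_coe, hcoe]
        exact ⟨_, he2 _ (Sym2.mem_mk_left _ _), rfl⟩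
      have hbX : b ∈ X' := by
        rw [← Finset.mem_coe, hcoe]
        exact ⟨_, he2 _ (Sym2.mem_mk_right _ _), rfl⟩
      rw [SimpleGraph.mem_edgeSet, SimpleGraph.sup_adj, SimpleGraph.fromEdgeSet_adj] at he1
      rcases he1 with he1 | ⟨he1, _⟩
      · right
        refine ⟨he1, ?_⟩
        intro v hv
        rcases Sym2.mem_iff.mp hv with rfl | rfl
        · exact haX
        · exact hbX
      · left
        rw [Set.mem_singleton_iff, Sym2.eq_iff] at he1
        simp only [Subtype.mk.injEq] at he1
        rcases he1 with ⟨rfl, rfl⟩ | ⟨rfl, rfl⟩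
        · exact ⟨rfl, haX, hbX⟩
        · exact ⟨Sym2.eq_swap, hbX, haX⟩
  have hle := Set.ncard_le_ncard hsub (Set.toFinite _)
  rw [Set.ncard_image_of_injective _ hinj] at hle
  change edgesWithin _ _ ≤ _ at hle
  have hEc : 2 * E.ncard = adjCount G X' X' := two_mul_edgesWithin G X'
  have hsp := hsparse X' (by omega)
  have hun := Set.ncard_union_le {e : Sym2 V | e = s(x, y) ∧ x ∈ X' ∧ y ∈ X'} E
  by_cases hxy : x ∈ X' ∧ y ∈ X'
  · have h1 : {e : Sym2 V | e = s(x, y) ∧ x ∈ X' ∧ y ∈ X'}.ncard ≤ 1 := by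
      refine (Set.ncard_le_ncard (t := {s(x, y)}) (fun e he => he.1)
        (Set.toFinite _)).trans (by simp)
    exact ⟨X', ⟨hu, by omega, by omega⟩, hxy⟩
  · have h0 : {e : Sym2 V | e = s(x, y) ∧ x ∈ X' ∧ y ∈ X'} = ∅ :=
      Set.eq_empty_of_forall_notMem fun e he => hxy he.2
    rw [h0, Set.ncard_empty] at hun
    rw [h0, Set.empty_union] at hle
    omega

end Translation

end SparseReduction

/-- Let G be a 3-connected, (3,6)-sparse 3-circuit with exactly 10 vertices,
at most 24 edges and minimum degree 4, which is not 3-rigid, and let u be a vertex of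
degree 4.  Then there are two nonadjacent neighbours x, y of u such that the graph
G - u + xy is (3,6)-sparse. -/
theorem exists_sparse_one_reduction {V : Type*} [Fintype V] [DecidableEq V]
    (G : SimpleGraph V) (hcard : Fintype.card V = 10)
    (hedges : G.edgeSet.ncard ≤ 24)
    (hconn : IsKConnected 3 G) (hsparse : Sparse36 G)
    (hcirc : IsCircuitGraph 3 G)
    (hmindeg : ∀ v, 4 ≤ (G.neighborSet v).ncard)
    (hnotrigid : ¬ IsRigidGraph 3 G)
    (u : V) (hu : (G.neighborSet u).ncard = 4) :
    ∃ (x y : V) (hx : G.Adj u x) (hy : G.Adj u y), x ≠ y ∧ ¬ G.Adj x y ∧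
      Sparse36 ((G.induce {v : V | v ≠ u}) ⊔ SimpleGraph.fromEdgeSet
        {s((⟨x, hx.ne'⟩ : {v : V | v ≠ u}), (⟨y, hy.ne'⟩ : {v : V | v ≠ u}))}) := by
  classical
  by_contra! hno
  have hsp : ∀ X : Finset V, 3 ≤ X.card → SparseReduction.adjCount G X X + 12 ≤ 6 * X.card := by
    intro X hX
    have h1 := hsparse X (by rwa [Set.ncard_coe_finset])
    rw [Set.ncard_coe_finset] at h1
    have h2 := SparseReduction.two_mul_edgesWithin G X
    omega
  have htot : edgesWithin G ((Finset.univ : Finset V) : Set V) = G.edgeSet.ncard := by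
    simp [edgesWithin]
  have hcex : SparseReduction.Counterexample G u :=
    { card := hcard
      total := by
        rw [← SparseReduction.two_mul_edgesWithin, htot]
        omega
      sparse := hsp
      deg := fun v => by
        rw [SparseReduction.adjCount_singleton_univ]
        exact hmindeg v
      deg_u := by rw [SparseReduction.adjCount_singleton_univ, hu]
      sep := fun c r A hA hc hr hw => SparseReduction.exists_boundary_edge hconn hA hc hr hw
      blocked := fun x y hx hy hxy hadj =>
        SparseReduction.exists_tight hsp hx.ne' hy.ne' (hno x y hx hy hxy hadj) }
  exact hcex.false
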